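/- Let n ≥ 2 and let x_1,…,x_{n−1}, t, y, v_1,…,v_n, u_1,…,u_n ∈ P be such that x_1,…,x_{n−1}, y are pairwise distinct, v_1,…,v_n are pairwise distinct, and u_1,…,u_n are pairwise distinct. Then in Q_n(P): Δ((x_1,…,x_{n−1},t),(v_1,…,v_n)) / Δ((x_1,…,x_{n−1},y),(v_1,…,v_n)) = Δ((x_1,…,x_{n−1},t),(u_1,…,u_n)) / Δ((x_1,…,x_{n−1},y),(u_1,…,u_n)); that is, the quotient of two (n×n)-determinants with the same right-side n-tuple does not depend on that right-side n-tuple. -/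

import Mathlib

noncomputable section

open scoped Classical
open MvPolynomial

set_option maxHeartbeats 1000000
set_option synthInstance.maxHeartbeats 400000

instance fact01 : Fact ((0:ℝ) < 1) := ⟨one_pos⟩

/-- The circle, modelled as `ℝ/ℤ`. -/
abbrev Circle1 : Type := AddCircle (1:ℝ)

/-- The coordinate in `[0,1)` of the point `x` of the circle obtained after removing the
point `o` and identifying the complement of `o` with an interval. -/
def coordAt (o x : Circle1) : ℝ := ((AddCircle.equivIco 1 0) (x - o) : ℝ)

/-- The sign `△` of a real number, as a rational number in `{-1, 0, 1}`. -/
def sgnQ (a : ℝ) : ℚ := if a < 0 then -1 else if a = 0 then 0 else 1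

/-- The linking number `J(rx, sy)` of the chords `rx` and `sy`, computed using the
cut point `o`. -/
def linkingAt (o r x s y : Circle1) : ℚ :=
  (1/2) * (sgnQ (coordAt o r - coordAt o x) * sgnQ (coordAt o r - coordAt o y)
        * sgnQ (coordAt o y - coordAt o x)
      - sgnQ (coordAt o r - coordAt o x) * sgnQ (coordAt o r - coordAt o s)
        * sgnQ (coordAt o s - coordAt o x))

lemma circle1_infinite : Infinite Circle1 := by
  have h : (Set.Ico (0:ℝ) (0+1)).Infinite := Set.Ico_infinite (by norm_num)
  haveI := h.to_subtype
  exact Infinite.of_injective (fun q : Set.Ico (0:ℝ) (0+1) => (AddCircle.equivIco 1 0).symm q)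
    ((AddCircle.equivIco 1 0).symm.injective)

lemma exists_cut (r x s y : Circle1) :
    ∃ o : Circle1, o ≠ r ∧ o ≠ x ∧ o ≠ s ∧ o ≠ y := by
  haveI : Infinite Circle1 := circle1_infinite
  have hfin : ({r, x, s, y} : Set Circle1).Finite :=
    (((Set.finite_singleton y).insert s).insert x).insert r
  obtain ⟨o, ho⟩ := hfin.infinite_compl.nonempty
  simp only [Set.mem_compl_iff, Set.mem_insert_iff, Set.mem_singleton_iff, not_or] at ho
  exact ⟨o, ho.1, ho.2.1, ho.2.2.1, ho.2.2.2⟩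

/-- The linking number `J(rx, sy)` of the chords `rx` and `sy` (computed with respect to
some cut point distinct from the four points; by the independence of the choice this is
the linking number). -/
def linkQ (r x s y : Circle1) : ℚ := linkingAt (exists_cut r x s y).choose r x s y

/-- The set of points of the circle `l`, listed in anticlockwise (cyclic) order:
there is a cut point `o` avoiding them such that the induced coordinates are
strictly increasing along the list. -/
def AnticlockwiseList (l : List Circle1) : Prop :=
  ∃ o : Circle1, (∀ p ∈ l, p ≠ o) ∧ (l.map (coordAt o)).Chain' (· < ·)

/-- Index type for the generators `xy` of the swapping ring of `P`
(one generator for each ordered pair of distinct points; the generators `xx`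
are identified with `0`). -/
abbrev SwapIdx (P : Set Circle1) : Type := {q : (↥P) × (↥P) // q.1 ≠ q.2}

/-- The swapping ring `Z(P)`: the polynomial ring over `K` on the generators `xy`,
`x ≠ y ∈ P` (this realizes the commutative ring generated by all ordered pairs `xy`
subject to the relations `xx = 0`). -/
abbrev SwapRing (K : Type) [Field K] (P : Set Circle1) : Type := MvPolynomial (SwapIdx P) K

/-- The generator `xy` of the swapping ring (equal to `0` when `x = y`). -/
def gen (K : Type) [Field K] (P : Set Circle1) (x y : ↥P) : SwapRing K P :=
  if h : x ≠ y then MvPolynomial.X (⟨(x, y), h⟩ : SwapIdx P) else 0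

/-- The value of the `(c1,c2)`-swapping bracket on two generators `rx` and `sy`:
`J(rx,sy) • (c1 • ry·sx + c2 • rx·sy)`. -/
def genBr (K : Type) [Field K] (P : Set Circle1) (c1 c2 : K) (g g' : SwapIdx P) :
    SwapRing K P :=
  ((linkQ g.1.1.1 g.1.2.1 g'.1.1.1 g'.1.2.1 : ℚ) : K) •
    (c1 • (gen K P g.1.1 g'.1.2 * gen K P g'.1.1 g.1.2)
      + c2 • (gen K P g.1.1 g.1.2 * gen K P g'.1.1 g'.1.2))

/-- The `(c1,c2)`-swapping bracket on `Z(P)`: the biderivation extending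
`{rx, sy} = J(rx,sy)·(c1·ry·sx + c2·rx·sy)` by the Leibniz rule in each argument.
The swapping bracket is the case `c1 = 1, c2 = 0`. -/
def swapBr (K : Type) [Field K] (P : Set Circle1) (c1 c2 : K) (a b : SwapRing K P) :
    SwapRing K P :=
  (MvPolynomial.mkDerivation K
    (fun g : SwapIdx P => (MvPolynomial.mkDerivation K (genBr K P c1 c2 g)) b)) a

/-- `Δ((x_1,…,x_m),(y_1,…,y_m)) = det (x_i y_j)` in the swapping ring. -/
def Dmat (K : Type) [Field K] (P : Set Circle1) (m : ℕ) (xs ys : Fin m → ↥P) :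
    SwapRing K P :=
  Matrix.det (Matrix.of fun i j => gen K P (xs i) (ys j))

/-- The ideal `R_n(P)` of `Z(P)` generated by all `(n+1)×(n+1)` determinants
`Δ((x_1,…,x_{n+1}),(y_1,…,y_{n+1}))`. -/
def Rideal (K : Type) [Field K] (P : Set Circle1) (n : ℕ) : Ideal (SwapRing K P) :=
  Ideal.span {D : SwapRing K P | ∃ xs ys : Fin (n+1) → ↥P, D = Dmat K P (n+1) xs ys}

/-- The rank `n` swapping ring `Z_n(P) = Z(P)/R_n(P)`. -/
abbrev ZnRing (K : Type) [Field K] (P : Set Circle1) (n : ℕ) : Type :=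
  SwapRing K P ⧸ Rideal K P n

/-- The quotient map `Z(P) → Z_n(P)`. -/
def toZn (K : Type) [Field K] (P : Set Circle1) (n : ℕ) :
    SwapRing K P →+* ZnRing K P n := Ideal.Quotient.mk (Rideal K P n)

/-- The total fraction ring `Q_n(P)` of the rank `n` swapping ring. -/
abbrev QnRing (K : Type) [Field K] (P : Set Circle1) (n : ℕ) : Type :=
  Localization (nonZeroDivisors (ZnRing K P n))

/-- The canonical map `Z(P) → Q_n(P)`. -/
def toQn (K : Type) [Field K] (P : Set Circle1) (n : ℕ) :
    SwapRing K P →+* QnRing K P n :=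
  (algebraMap (ZnRing K P n) (QnRing K P n)).comp (toZn K P n)

/-- `Bq` is the extension to the total fraction ring `Q_n(P)` of the `(c1,c2)`-swapping
bracket of the rank `n` swapping algebra: it agrees with the swapping bracket on the image
of `Z(P)` and satisfies the Leibniz rule in both arguments (these properties determine it
uniquely). -/
def IsQnBracket (K : Type) [Field K] (P : Set Circle1) (n : ℕ) (c1 c2 : K)
    (Bq : QnRing K P n → QnRing K P n → QnRing K P n) : Prop :=
  (∀ a b : SwapRing K P,
      Bq (toQn K P n a) (toQn K P n b) = toQn K P n (swapBr K P c1 c2 a b)) ∧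
  (∀ a b c : QnRing K P n, Bq (a * b) c = a * Bq b c + b * Bq a c) ∧
  (∀ a b c : QnRing K P n, Bq a (b * c) = b * Bq a c + c * Bq a b)

/-- The `n`-tuple `(x_1, …, x_a, y_1, …, y_b, z_1, …, z_{n-a-b})` built from three
families of points (families are indexed from `0`, i.e. `x 0 = x_1`). -/
def rows3 {α : Type*} {n : ℕ} (x y z : ℕ → α) (a b : ℕ) : Fin n → α :=
  fun i => if (i : ℕ) < a then x (i : ℕ)
    else if (i : ℕ) < a + b then y ((i : ℕ) - a)
    else z ((i : ℕ) - (a + b))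

/-- The `n`-tuple `(x_1, …, x_a, y_1, …, y_b, z_1, …, z_{n-1-a-b}, w)` built from three
families of points and a final point `w`. -/
def rows3s {α : Type*} {n : ℕ} (x y z : ℕ → α) (a b : ℕ) (w : α) : Fin n → α :=
  fun i => if (i : ℕ) < a then x (i : ℕ)
    else if (i : ℕ) < a + b then y ((i : ℕ) - a)
    else if (i : ℕ) < n - 1 then z ((i : ℕ) - (a + b))
    else w

/-- The `n`-tuple `(x_1, …, x_{n-1}, t)`. -/
def snocTup {α : Type*} {n : ℕ} (x : ℕ → α) (t : α) : Fin n → α :=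
  fun i => if (i : ℕ) < n - 1 then x (i : ℕ) else t

/-- The list `f_a, f_{a-1}, …, f_1` (descending enumeration). -/
def descPts (f : ℕ → Circle1) (a : ℕ) : List Circle1 := ((List.range a).map f).reverse

/-- The list `f_1, f_2, …, f_a` (ascending enumeration). -/
def ascPts (f : ℕ → Circle1) (a : ℕ) : List Circle1 := (List.range a).map f

/-- The `(n×n)`-determinant quotient `Δ(numR, v)/Δ(denR, v)` as an element of the total
fraction ring `Q_n(P)`. -/
def EQuot (K : Type) [Field K] (P : Set Circle1) (n : ℕ)
    (numR denR v : Fin n → ↥P)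
    (h : toZn K P n (Dmat K P n denR v) ∈ nonZeroDivisors (ZnRing K P n)) :
    QnRing K P n :=
  Localization.mk (toZn K P n (Dmat K P n numR v)) ⟨toZn K P n (Dmat K P n denR v), h⟩


lemma quad_prime_field (n : ℕ) (hn : 2 ≤ n) (F : Type*) [Field F] :
    Prime (∑ k, X (Sum.inl k) * X (Sum.inr k) : MvPolynomial (Fin n ⊕ Fin n) F) := by
  have h := irreducible_sumSMulXSMulY (R := F) (n := Fin n)
    (c := Finsupp.equivFunOnFinite.symm (fun _ => 1)) ?_ ?_
  · have e : sumSMulXSMulY (R := F) (n := Fin n) (Finsupp.equivFunOnFinite.symm (fun _ => 1))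
        = ∑ k, X (Sum.inl k) * X (Sum.inr k) := by
      unfold sumSMulXSMulY
      rw [Finsupp.linearCombination_apply, Finsupp.sum_fintype _ _ (by simp)]
      simp
    rw [e] at h
    exact UniqueFactorizationMonoid.irreducible_iff_prime.1 h
  · refine ⟨⟨0, by omega⟩, by simp, ⟨1, by omega⟩, by simp, by simp⟩
  · intro r hr
    have := hr ⟨0, by omega⟩
    simpa [isUnit_iff_dvd_one] using this

lemma quad_coeff (n : ℕ) (R : Type*) [CommRing R] (d : (Fin n ⊕ Fin n) →₀ ℕ) :
    coeff d (∑ k, X (Sum.inl k) * X (Sum.inr k) : MvPolynomial (Fin n ⊕ Fin n) R) = 0 ∨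
    coeff d (∑ k, X (Sum.inl k) * X (Sum.inr k) : MvPolynomial (Fin n ⊕ Fin n) R) = 1 := by
  have e : ∀ k : Fin n, (X (Sum.inl k) * X (Sum.inr k) : MvPolynomial (Fin n ⊕ Fin n) R)
    = monomial (Finsupp.single (Sum.inl k) 1 + Finsupp.single (Sum.inr k) 1) 1 := by
    intro k; simp [X, monomial_mul]
  simp only [coeff_sum, e, coeff_monomial]
  by_cases h : ∃ k : Fin n, Finsupp.single (Sum.inl k) 1 + Finsupp.single (Sum.inr k) 1 = d
  · right
    obtain ⟨k, rfl⟩ := h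
    rw [Finset.sum_eq_single k]
    · simp
    · intro b _ hb
      rw [if_neg]
      intro h
      have := DFunLike.congr_fun h (Sum.inl b)
      simp [hb.symm] at this
    · simp
  · left
    push Not at h
    exact Finset.sum_eq_zero fun k _ => if_neg (h k)

lemma quad_prime (n : ℕ) (hn : 2 ≤ n) (R : Type*) [CommRing R] [IsDomain R] :
    Prime (∑ k, X (Sum.inl k) * X (Sum.inr k) : MvPolynomial (Fin n ⊕ Fin n) R) := by
  set q := (∑ k, X (Sum.inl k) * X (Sum.inr k) : MvPolynomial (Fin n ⊕ Fin n) R) with hq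
  let F := FractionRing R
  let φ := MvPolynomial.map (σ := Fin n ⊕ Fin n) (algebraMap R F)
  have hφ : Function.Injective φ := MvPolynomial.map_injective _ (IsFractionRing.injective R F)
  have hp : Prime (φ q) := by
    have := quad_prime_field n hn F
    simpa [φ, hq] using this
  have hq0 : q ≠ 0 := by
    intro h; apply hp.ne_zero; rw [h, map_zero]
  let lo : LinearOrder (Fin n ⊕ Fin n) :=
    LinearOrder.lift' (Fintype.equivFin (Fin n ⊕ Fin n)) (Equiv.injective _)
  let m : MonomialOrder (Fin n ⊕ Fin n) :=
    @MonomialOrder.lex _ lo (@Finite.to_wellFoundedGT _ _ lo.toPreorder)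
  have hlc : m.leadingCoeff q = 1 := by
    rcases quad_coeff n R (m.degree q) with h | h
    · exact absurd h (m.leadingCoeff_ne_zero_iff.2 hq0)
    · exact h
  have hdvd : ∀ f, φ q ∣ φ f → q ∣ f := by
    rintro f ⟨h, hh⟩
    obtain ⟨g, r, hf, -, hr⟩ := m.div_single (b := q) (by rw [hlc]; exact isUnit_one) f
    have h1 : φ q * (h - φ g) = φ r := by
      rw [mul_sub, ← hh, hf]; simp; ring
    by_cases hr0 : r = 0
    · exact ⟨g, by rw [hf, hr0]; ring⟩
    exfalso
    have hr0' : φ r ≠ 0 := by rwa [Ne, map_eq_zero_iff _ hφ]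
    have h2 : h - φ g ≠ 0 := by
      intro h; rw [h, mul_zero] at h1; exact hr0' h1.symm
    have hdeg : m.degree (φ q) + m.degree (h - φ g) = m.degree (φ r) := by
      rw [← h1, m.degree_mul hp.ne_zero h2]
    have hsup : ∀ p, (φ p).support = p.support := fun p =>
      MvPolynomial.support_map_of_injective p (IsFractionRing.injective R F)
    have hd : ∀ p, m.degree (φ p) = m.degree p := by
      intro p; simp only [MonomialOrder.degree, hsup]
    rw [hd, hd] at hdeg
    refine hr (m.degree r) (m.degree_mem_support hr0) ?_
    rw [← hdeg]; exact le_self_add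
  refine ⟨hq0, fun h => hp.not_isUnit (h.map φ), fun a b hab => ?_⟩
  have := hp.dvd_or_dvd (a := φ a) (b := φ b) (by rw [← map_mul]; exact map_dvd φ hab)
  exact this.imp (hdvd a) (hdvd b)

/-- the quadric `a_i · b_i`. -/
def qpoly (K : Type*) [CommRing K] (n : ℕ) {ι : Type*} (i : ι) : MvPolynomial (ι × (Fin n ⊕ Fin n)) K :=
  ∑ k, X (i, Sum.inl k) * X (i, Sum.inr k)

def Jideal (K : Type*) [CommRing K] (n : ℕ) (ι : Type*) : Ideal (MvPolynomial (ι × (Fin n ⊕ Fin n)) K) :=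
  Ideal.span (Set.range (qpoly K n))

lemma Jideal_equiv (K : Type*) [CommRing K] (n : ℕ) {ι κ : Type*} (e : ι ≃ κ)
    (h : (Jideal K n ι).IsPrime) : (Jideal K n κ).IsPrime := by
  let E := (renameEquiv K (e.prodCongr (Equiv.refl (Fin n ⊕ Fin n)))).toRingEquiv
  have : Jideal K n κ = (Jideal K n ι).map E := by
    rw [Jideal, Jideal, Ideal.map_span, ← Set.range_comp, ← e.surjective.range_comp]
    congr 2
    ext1 i
    simp [E, qpoly]
  rw [this]
  exact Ideal.map_isPrime_of_equiv E

lemma Jideal_option (K : Type*) [CommRing K] (n : ℕ) (hn : 2 ≤ n) {ι : Type*}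
    (h : (Jideal K n ι).IsPrime) : (Jideal K n (Option ι)).IsPrime := by
  let W := Fin n ⊕ Fin n
  let ev : Option ι × W ≃ W ⊕ (ι × W) :=
    { toFun := fun p => match p with
        | (none, w) => Sum.inl w
        | (some i, w) => Sum.inr (i, w)
      invFun := fun s => match s with
        | Sum.inl w => (none, w)
        | Sum.inr (i, w) => (some i, w)
      left_inv := by rintro ⟨_ | i, w⟩ <;> rfl
      right_inv := by rintro (w | ⟨i, w⟩) <;> rfl }
  let E : MvPolynomial (Option ι × W) K ≃+* MvPolynomial W (MvPolynomial (ι × W) K) :=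
    ((renameEquiv K ev).trans (sumAlgEquiv K W (ι × W))).toRingEquiv
  let B := MvPolynomial (ι × W) K ⧸ Jideal K n ι
  let Φ := MvPolynomial.map (σ := W) (Ideal.Quotient.mk (Jideal K n ι))
  have hΦ : Function.Surjective Φ := MvPolynomial.map_surjective _ Ideal.Quotient.mk_surjective
  let q (R : Type _) [CommRing R] := (∑ k, X (Sum.inl k) * X (Sum.inr k) : MvPolynomial W R)
  have hq : Prime (q B) := quad_prime n hn B
  have hqm : Φ (q _) = q B := by simp [Φ, q]
  have hEn : E (qpoly K n none) = q _ := by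
    simp [E, qpoly, q, ev]
  have hEs : ∀ i, E (qpoly K n (some i)) = C (qpoly K n i) := by
    intro i; simp [E, qpoly, ev]
  have key : Jideal K n (Option ι) = (Ideal.span {q B}).comap (Φ.comp E.toRingHom) := by
    apply le_antisymm
    · rw [Jideal, Ideal.span_le]
      rintro _ ⟨i, rfl⟩
      rw [SetLike.mem_coe, Ideal.mem_comap, RingHom.comp_apply]
      cases i with
      | none => 
        have : E.toRingHom (qpoly K n none) = q _ := hEn
        rw [this, hqm]; exact Ideal.mem_span_singleton_self _
      | some i =>
        have : E.toRingHom (qpoly K n (some i)) = C (qpoly K n i) := hEs i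
        rw [this]
        have : Φ (C (qpoly K n i)) = 0 := by
          simp only [Φ, map_C]
          have h0 : qpoly K n i ∈ Jideal K n ι := Ideal.subset_span (Set.mem_range_self i)
          rw [Ideal.Quotient.eq_zero_iff_mem.2 h0, map_zero]
        rw [this]; exact Ideal.zero_mem _
    · intro f hf
      rw [Ideal.mem_comap, RingHom.comp_apply, Ideal.mem_span_singleton] at hf
      obtain ⟨g, hg⟩ := hf
      obtain ⟨g, rfl⟩ := hΦ g
      have h0 : E f - q _ * g ∈ RingHom.ker Φ := by
        rw [RingHom.mem_ker, map_sub, map_mul, hqm, ← hg]; simp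
      have h1 : E f - q _ * g ∈ (Jideal K n ι).map C := by
        have := MvPolynomial.ker_map (σ := W) (Ideal.Quotient.mk (Jideal K n ι))
        rw [Ideal.mk_ker] at this
        rw [← this]; exact h0
      have h2 : (Jideal K n ι).map C ≤ (Jideal K n (Option ι)).comap E.symm.toRingHom := by
        rw [Jideal, Ideal.map_span, Ideal.span_le]
        rintro _ ⟨_, ⟨i, rfl⟩, rfl⟩
        rw [← hEs, SetLike.mem_coe, Ideal.mem_comap]
        have : E.symm.toRingHom (E (qpoly K n (some i))) = qpoly K n (some i) := E.symm_apply_apply _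
        rw [this]
        exact Ideal.subset_span ⟨_, rfl⟩
      have h3 := h2 h1
      rw [Ideal.mem_comap, ← hEn, map_sub, map_mul] at h3
      have a1 : E.symm.toRingHom (E f) = f := E.symm_apply_apply _
      have a2 : E.symm.toRingHom (E (qpoly K n none)) = qpoly K n none := E.symm_apply_apply _
      rw [a1, a2] at h3
      have := Ideal.add_mem _ h3 (Ideal.mul_mem_right (E.symm.toRingHom g) _ 
        (Ideal.subset_span ⟨none, rfl⟩ : qpoly K n none ∈ Jideal K n (Option ι)))
      simpa using this
  rw [key]
  have := (Ideal.span_singleton_prime hq.ne_zero).2 hq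
  exact Ideal.comap_isPrime _ _

lemma Jideal_prime (K : Type*) [Field K] (n : ℕ) (hn : 2 ≤ n) (ι : Type) [Finite ι] :
    (Jideal K n ι).IsPrime := by
  induction ι using Finite.induction_empty_option with
  | of_equiv e h => exact Jideal_equiv K n e h
  | h_empty =>
    have : Jideal K n PEmpty = ⊥ := by
      rw [Jideal, Set.range_eq_empty, Ideal.span_empty]
    rw [this]; exact Ideal.isPrime_bot
  | h_option h => exact Jideal_option K n hn h

def piHom (K : Type*) [CommRing K] (n : ℕ) (ι : Type*) :
    MvPolynomial (ι × ι) K →ₐ[K] MvPolynomial (ι × (Fin n ⊕ Fin n)) K :=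
  aeval (fun z => ∑ k, X (z.1, Sum.inl k) * X (z.2, Sum.inr k))

def Iideal (K : Type*) [CommRing K] (n : ℕ) (ι : Type*) : Ideal (MvPolynomial (ι × ι) K) :=
  Ideal.span {D | ∃ p q : Fin (n+1) → ι, D = Matrix.det (Matrix.of fun i j => X (p i, q j))}

def GoodM (n N : ℕ) (m : (Fin N × Fin N) →₀ ℕ) : Prop :=
  ¬ ∃ p q : Fin (n+1) → Fin N, StrictMono p ∧ StrictMono q ∧ ∀ k, m (p k, q k) ≠ 0

def wtM {N : ℕ} (m : (Fin N × Fin N) →₀ ℕ) : ℕ := m.sum fun z c => c * ((z.1 : ℕ) * (z.2 : ℕ))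

lemma wtM_add {N : ℕ} (m m' : (Fin N × Fin N) →₀ ℕ) : wtM (m + m') = wtM m + wtM m' := by
  unfold wtM
  rw [Finsupp.sum_add_index'] <;> intros <;> ring

lemma wtM_sum {N l : ℕ} (p q : Fin l → Fin N) :
    wtM (∑ k, Finsupp.single (p k, q k) 1) = ∑ k, (p k : ℕ) * (q k : ℕ) := by
  have h : ∀ s : Finset (Fin l), wtM (∑ k ∈ s, Finsupp.single (p k, q k) 1)
      = ∑ k ∈ s, (p k : ℕ) * (q k : ℕ) := by
    intro s
    induction s using Finset.induction_on with
    | empty => simp [wtM]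
    | insert a s ha ih =>
      rw [Finset.sum_insert ha, Finset.sum_insert ha, wtM_add, ih]
      simp [wtM]
  exact h _

lemma perm_rearr {N l : ℕ} (p q : Fin l → Fin N) (hp : StrictMono p) (hq : StrictMono q)
    (σ : Equiv.Perm (Fin l)) (hσ : σ ≠ 1) :
    ∑ k, (p (σ k) : ℕ) * (q k : ℕ) < ∑ k, (p k : ℕ) * (q k : ℕ) := by
  have hmv : Monovary (fun k => (p k : ℕ)) (fun k => (q k : ℕ)) := by
    intro i j hij
    have : i < j := hq.lt_iff_lt.1 hij
    exact (hp this).le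
  rw [hmv.sum_comp_perm_mul_lt_sum_mul_iff]
  intro h
  apply hσ
  have hm : StrictMono σ := by
    intro i j hij
    have h1 := h (show (q i : ℕ) < q j from hq hij)
    have h2 : σ i ≤ σ j := hp.le_iff_le.1 h1
    exact lt_of_le_of_ne h2 (fun e => hij.ne (σ.injective e))
  ext i
  have : (StrictMono.orderIsoOfSurjective σ hm σ.surjective) = OrderIso.refl _ := Subsingleton.elim _ _
  have := congrArg (fun e : Fin l ≃o Fin l => (e i : ℕ)) this
  simpa using this

lemma spanning (K : Type*) [CommRing K] (n N : ℕ) (w : ℕ) : ∀ m : (Fin N × Fin N) →₀ ℕ, wtM m = w →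
    (monomial m (1:K)) ∈ (Iideal K n (Fin N)).restrictScalars K ⊔
      restrictSupport K {m | GoodM n N m} := by
  induction w using Nat.strong_induction_on with
  | _ w ih =>
  intro m hm
  by_cases hg : GoodM n N m
  · apply Submodule.mem_sup_right
    rw [mem_restrictSupport_iff]
    intro d hd
    have := support_monomial_subset hd
    simp at this
    rw [this]; exact hg
  · unfold GoodM at hg
    push Not at hg
    obtain ⟨p, q, hp, hq, hne⟩ := hg
    set s : Equiv.Perm (Fin (n+1)) → ((Fin N × Fin N) →₀ ℕ) :=
      fun σ => ∑ k, Finsupp.single (p (σ k), q k) 1 with hs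
    have hle : s 1 ≤ m := by
      intro z
      simp only [hs, Finsupp.finsetSum_apply, Finsupp.single_apply, Equiv.Perm.one_apply]
      by_cases hz : ∃ k, (p k, q k) = z
      · obtain ⟨k, rfl⟩ := hz
        rw [Finset.sum_eq_single k]
        · simpa using Nat.one_le_iff_ne_zero.2 (hne k)
        · intro b _ hb
          rw [if_neg]
          intro h
          exact hb (hp.injective (Prod.ext_iff.1 h).1)
        · simp
      · push Not at hz
        rw [Finset.sum_eq_zero]
        · exact Nat.zero_le _
        · intro k _; exact if_neg (hz k)
    obtain ⟨m0, rfl⟩ := exists_add_of_le hle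
    have hdet : monomial m0 (1:K) * Matrix.det (Matrix.of fun i j => (X (p i, q j) : MvPolynomial (Fin N × Fin N) K))
        = ∑ σ : Equiv.Perm (Fin (n+1)), ((Equiv.Perm.sign σ : ℤ) : K) • monomial (s σ + m0) (1:K) := by
      rw [Matrix.det_apply', Finset.mul_sum]
      refine Finset.sum_congr rfl fun σ _ => ?_
      have : ∏ i, (X (p (σ i), q i) : MvPolynomial (Fin N × Fin N) K) = monomial (s σ) 1 := by
        simp only [X, hs]
        rw [monomial_sum_one]
      simp only [Matrix.of_apply]
      rw [this, smul_eq_C_mul, mul_left_comm, monomial_mul, add_comm m0, one_mul]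
      simp
    rw [← Finset.add_sum_erase _ _ (Finset.mem_univ (1 : Equiv.Perm (Fin (n+1))))] at hdet
    simp only [Equiv.Perm.sign_one, Units.val_one, Int.cast_one, one_smul] at hdet
    rw [← sub_eq_iff_eq_add] at hdet
    rw [← hdet]
    apply Submodule.sub_mem
    · apply Submodule.mem_sup_left
      rw [Submodule.restrictScalars_mem]
      exact Ideal.mul_mem_left _ _ (Ideal.subset_span ⟨p, q, rfl⟩)
    · apply Submodule.sum_mem
      intro σ hσ
      apply Submodule.smul_mem
      refine ih _ ?_ _ rfl
      rw [← hm, wtM_add, wtM_add]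
      have := perm_rearr p q hp hq σ (by simpa using hσ)
      simp only [hs, wtM_sum]
      simpa using this

lemma spanning' (K : Type*) [CommRing K] (n N : ℕ) (f : MvPolynomial (Fin N × Fin N) K) :
    ∃ g, (∀ m ∈ g.support, GoodM n N m) ∧ f - g ∈ Iideal K n (Fin N) := by
  have h : f ∈ (Iideal K n (Fin N)).restrictScalars K ⊔
      restrictSupport K {m | GoodM n N m} := by
    rw [f.as_sum]
    apply Submodule.sum_mem
    intro m _
    have : monomial m (coeff m f) = coeff m f • monomial m (1:K) := by simp [smul_monomial]
    rw [this]
    exact Submodule.smul_mem _ _ (spanning K n N _ m rfl)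
  obtain ⟨a, ha, g, hg, rfl⟩ := Submodule.mem_sup.1 h
  refine ⟨g, ?_, by simpa using ha⟩
  rw [mem_restrictSupport_iff] at hg
  exact fun m hm => hg hm

lemma coloring {N : ℕ} (k : ℕ) : ∀ S : Set (Fin N × Fin N),
    (¬ ∃ p q : Fin (k+1) → Fin N, StrictMono p ∧ StrictMono q ∧ ∀ i, (p i, q i) ∈ S) →
    ∃ c : Fin N × Fin N → ℕ, (∀ z ∈ S, c z < k) ∧
      ∀ z ∈ S, ∀ z' ∈ S, c z = c z' → ¬ (z.1 < z'.1 ∧ z.2 < z'.2) := by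
  induction k with
  | zero =>
    intro S hS
    have : Subsingleton (Fin (0+1)) := inferInstanceAs (Subsingleton (Fin 1))
    have : ∀ z, z ∉ S := by
      intro z hz
      exact hS ⟨fun _ => z.1, fun _ => z.2, Subsingleton.strictMono _, Subsingleton.strictMono _, fun _ => hz⟩
    exact ⟨fun _ => 0, fun z hz => absurd hz (this z), fun z hz => absurd hz (this z)⟩
  | succ k ih =>
    intro S hS
    let S' : Set (Fin N × Fin N) := {z | z ∈ S ∧ ∃ y ∈ S, y.1 < z.1 ∧ y.2 < z.2}
    obtain ⟨c, hc1, hc2⟩ := ih S' (by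
      rintro ⟨p, q, hp, hq, h⟩
      obtain ⟨y, hy, h1, h2⟩ := (h 0).2
      apply hS
      refine ⟨Fin.cons y.1 p, Fin.cons y.2 q, ?_, ?_, ?_⟩
      · rw [Fin.strictMono_iff_lt_succ]
        intro i
        cases i using Fin.cases with
        | zero => simpa using h1
        | succ i => simpa [← Fin.succ_castSucc] using hp i.castSucc_lt_succ
      · rw [Fin.strictMono_iff_lt_succ]
        intro i
        cases i using Fin.cases with
        | zero => simpa using h2
        | succ i => simpa [← Fin.succ_castSucc] using hq i.castSucc_lt_succ
      · intro i
        cases i using Fin.cases with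
        | zero => simpa using hy
        | succ i => simpa using (h i).1)
    refine ⟨fun z => if z ∈ S' then c z else k, ?_, ?_⟩
    · intro z hz
      dsimp only
      split_ifs with h
      · exact (hc1 z h).trans (Nat.lt_succ_self _)
      · exact Nat.lt_succ_self _
    · intro z hz z' hz' he hlt
      have hz'S : z' ∈ S' := ⟨hz', z, hz, hlt⟩
      dsimp only at he
      rw [if_pos hz'S] at he
      by_cases h : z ∈ S'
      · rw [if_pos h] at he
        exact hc2 z h z' hz'S he hlt
      · rw [if_neg h] at he
        have := hc1 z' hz'S
        omega

lemma finsupp_nat_ind {α : Type*} {motive : (α →₀ ℕ) → Prop} (f : α →₀ ℕ) (zero : motive 0)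
    (add : ∀ f g, motive f → motive g → motive (f + g))
    (single : ∀ a, motive (Finsupp.single a 1)) : motive f := by
  refine Finsupp.induction_linear f zero add ?_
  intro a b
  induction b with
  | zero => simpa using zero
  | succ b ih => rw [Finsupp.single_add]; exact add _ _ ih (single a)

lemma pi_add (n N : ℕ) (m m' : (Fin N × Fin N) →₀ ℕ) :
      piHom ℚ n (Fin N) (monomial (m + m') 1) =
        piHom ℚ n (Fin N) (monomial m 1) * piHom ℚ n (Fin N) (monomial m' 1) := by
  rw [← map_mul, monomial_mul, one_mul]

lemma pi_single (n N : ℕ) (z : Fin N × Fin N) :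
      piHom ℚ n (Fin N) (monomial (Finsupp.single z 1) 1) =
        ∑ k, monomial (Finsupp.single (z.1, Sum.inl k) 1 + Finsupp.single (z.2, Sum.inr k) 1) 1 := by
  have : (monomial (Finsupp.single z 1) 1 : MvPolynomial (Fin N × Fin N) ℚ) = X z := rfl
  rw [this, piHom, aeval_X]
  refine Finset.sum_congr rfl fun k _ => ?_
  simp [X, monomial_mul]

lemma pi_support (n N : ℕ) (m : (Fin N × Fin N) →₀ ℕ) :
    ∀ d ∈ (piHom ℚ n (Fin N) (monomial m 1)).support, 
    ∃ M : Fin N → Fin N → Fin n → ℕ, (∀ p q, ∑ k, M p q k = m (p, q)) ∧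
      (∀ p k, ∑ q, M p q k = d (p, Sum.inl k)) ∧ (∀ q k, ∑ p, M p q k = d (q, Sum.inr k)) := by
  induction m using finsupp_nat_ind with
  | zero =>
    intro d hd
    have : (monomial 0 1 : MvPolynomial (Fin N × Fin N) ℚ) = 1 := rfl
    rw [this, map_one] at hd
    have hd0 : d = 0 := by
      by_contra h
      rw [mem_support_iff, coeff_one, if_neg (Ne.symm h)] at hd
      exact hd rfl
    subst hd0
    exact ⟨fun _ _ _ => 0, by simp, by simp, by simp⟩
  | add m m' ih ih' =>
    intro d hd
    rw [pi_add] at hd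
    have := support_mul _ _ hd
    obtain ⟨d1, h1, d2, h2, rfl⟩ := Finset.mem_add.1 this
    obtain ⟨M, a, b, c⟩ := ih d1 h1
    obtain ⟨M', a', b', c'⟩ := ih' d2 h2
    refine ⟨fun p q k => M p q k + M' p q k, ?_, ?_, ?_⟩ <;>
      simp [Finset.sum_add_distrib, *]
  | single z =>
    intro d hd
    rw [pi_single] at hd
    rw [mem_support_iff, coeff_sum] at hd
    obtain ⟨k, -, hk⟩ := Finset.exists_ne_zero_of_sum_ne_zero hd
    rw [coeff_monomial] at hk
    split_ifs at hk with h
    · subst h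
      refine ⟨fun p q l => if p = z.1 ∧ q = z.2 ∧ l = k then 1 else 0, ?_, ?_, ?_⟩
      · intro p q
        by_cases hp : p = z.1 <;> by_cases hq : q = z.2 <;>
          simp [hp, hq, Finsupp.single_apply, Prod.ext_iff, eq_comm]
      · intro p l
        rcases eq_or_ne p z.1 with hp | hp <;> rcases eq_or_ne l k with hq | hq <;>
          first
          | (simp [hp, hq, Finsupp.single_apply, Prod.ext_iff]; done)
          | (simp [hp, hq, hq.symm, Finsupp.single_apply, Prod.ext_iff]; done)
          | (simp [hp, hq, hp.symm, Finsupp.single_apply, Prod.ext_iff]; done)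
          | (simp [hp, hq, hp.symm, hq.symm, Finsupp.single_apply, Prod.ext_iff]; done)
      · intro q l
        rcases eq_or_ne q z.2 with hp | hp <;> rcases eq_or_ne l k with hq | hq <;>
          first
          | (simp [hp, hq, Finsupp.single_apply, Prod.ext_iff]; done)
          | (simp [hp, hq, hq.symm, Finsupp.single_apply, Prod.ext_iff]; done)
          | (simp [hp, hq, hp.symm, Finsupp.single_apply, Prod.ext_iff]; done)
          | (simp [hp, hq, hp.symm, hq.symm, Finsupp.single_apply, Prod.ext_iff]; done)
    · exact absurd rfl hk

lemma nonneg_mul {σ : Type*} (f g : MvPolynomial σ ℚ) (hf : ∀ d, 0 ≤ coeff d f) (hg : ∀ d, 0 ≤ coeff d g)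
   : (∀ d, 0 ≤ coeff d (f * g)) ∧ ∀ a b, 0 < coeff a f → 0 < coeff b g → 0 < coeff (a + b) (f * g) := by
  constructor
  · intro d
    rw [coeff_mul]
    exact Finset.sum_nonneg fun x _ => mul_nonneg (hf _) (hg _)
  · intro a b ha hb
    rw [coeff_mul]
    refine Finset.sum_pos' (fun x _ => mul_nonneg (hf _) (hg _)) ⟨(a, b), by simp, mul_pos ha hb⟩

def keyM {n N : ℕ} (c : Fin N × Fin N → Fin n) (m : (Fin N × Fin N) →₀ ℕ) :
    (Fin N × (Fin n ⊕ Fin n)) →₀ ℕ :=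
  m.sum fun z a => a • (Finsupp.single (z.1, Sum.inl (c z)) 1 + Finsupp.single (z.2, Sum.inr (c z)) 1)

lemma keyM_add {n N : ℕ} (c : Fin N × Fin N → Fin n) (m m' : (Fin N × Fin N) →₀ ℕ) :
    keyM c (m + m') = keyM c m + keyM c m' := by
  unfold keyM
  rw [Finsupp.sum_add_index']
  · simp
  · intro a b₁ b₂; rw [add_smul]

lemma keyM_inl {n N : ℕ} (c : Fin N × Fin N → Fin n) (m : (Fin N × Fin N) →₀ ℕ) (p : Fin N) (k : Fin n) :
    keyM c m (p, Sum.inl k) = ∑ q, if c (p, q) = k then m (p, q) else 0 := by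
  unfold keyM
  rw [Finsupp.sum_apply, Finsupp.sum_fintype _ _ (by simp), Fintype.sum_prod_type,
    Finset.sum_eq_single p]
  · refine Finset.sum_congr rfl fun q _ => ?_
    simp [Finsupp.single_apply]
  · intro b _ hb
    simp [Finsupp.single_apply, hb]
  · simp

lemma keyM_inr {n N : ℕ} (c : Fin N × Fin N → Fin n) (m : (Fin N × Fin N) →₀ ℕ) (q : Fin N) (k : Fin n) :
    keyM c m (q, Sum.inr k) = ∑ p, if c (p, q) = k then m (p, q) else 0 := by
  unfold keyM
  rw [Finsupp.sum_apply, Finsupp.sum_fintype _ _ (by simp), Fintype.sum_prod_type_right,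
    Finset.sum_eq_single q]
  · refine Finset.sum_congr rfl fun p _ => ?_
    simp [Finsupp.single_apply]
  · intro b _ hb
    simp [Finsupp.single_apply, hb]
  · simp

lemma pi_pos {n N : ℕ} (c : Fin N × Fin N → Fin n) (m : (Fin N × Fin N) →₀ ℕ) :
    (∀ d, 0 ≤ coeff d (piHom ℚ n (Fin N) (monomial m 1))) ∧
    0 < coeff (keyM c m) (piHom ℚ n (Fin N) (monomial m 1)) := by
  induction m using finsupp_nat_ind with
  | zero =>
    have : (monomial 0 1 : MvPolynomial (Fin N × Fin N) ℚ) = 1 := rfl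
    rw [this, map_one]
    constructor
    · intro d; rw [coeff_one]; split_ifs <;> norm_num
    · simp [keyM]
  | add m m' ih ih' =>
    rw [pi_add, keyM_add]
    have := nonneg_mul _ _ ih.1 ih'.1
    exact ⟨this.1, this.2 _ _ ih.2 ih'.2⟩
  | single z =>
    rw [pi_single]
    simp only [coeff_sum, coeff_monomial]
    have : ∀ (d) (k : Fin n), (0:ℚ) ≤ if (Finsupp.single (z.1, (Sum.inl k : Fin n ⊕ Fin n)) 1 + Finsupp.single (z.2, Sum.inr k) 1) = d then 1 else 0 := by
      intro d k; split_ifs <;> norm_num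
    refine ⟨fun d => Finset.sum_nonneg fun k _ => this d k, ?_⟩
    refine Finset.sum_pos' (fun k _ => this _ k) ⟨c z, Finset.mem_univ _, ?_⟩
    rw [if_pos]
    · norm_num
    · simp [keyM]

def tailT {N : ℕ} (m : Fin N → Fin N → ℕ) (s t : ℕ) : ℕ :=
  ∑ p : Fin N, ∑ q : Fin N, if s ≤ (p : ℕ) ∧ (q : ℕ) < t then m p q else 0

lemma tailT_inj {N : ℕ} (m m' : Fin N → Fin N → ℕ) (h : ∀ s t, tailT m s t = tailT m' s t) (p q : Fin N) :
    m p q = m' p q := by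
  have key : ∀ m : Fin N → Fin N → ℕ, tailT m p (q+1) + tailT m (p+1) q
      = tailT m (p+1) (q+1) + tailT m p q + m p q := by
    intro m
    have e : m p q = ∑ a, ∑ b, if a = p ∧ b = q then m a b else 0 := by
      rw [Finset.sum_eq_single p, Finset.sum_eq_single q] <;> simp +contextual
    rw [e]
    simp only [tailT, ← Finset.sum_add_distrib]
    refine Finset.sum_congr rfl fun a _ => Finset.sum_congr rfl fun b _ => ?_
    simp only [Fin.ext_iff]
    split_ifs <;> omega
  have h1 := key m
  have h2 := key m'
  simp only [h] at h1
  omega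

lemma tailT_le {N : ℕ} (m m' : Fin N → Fin N → ℕ)
    (hrow : ∀ p, ∑ q, m' p q = ∑ q, m p q) (hcol : ∀ q, ∑ p, m' p q = ∑ p, m p q)
    (hch : ∀ p q p' q', m p q ≠ 0 → m p' q' ≠ 0 → p < p' → ¬ q < q') (s t : ℕ) :
    tailT m' s t ≤ tailT m s t := by
  by_cases h : ∃ p q : Fin N, m p q ≠ 0 ∧ s ≤ (p : ℕ) ∧ t ≤ (q : ℕ)
  · obtain ⟨p0, q0, h0, hs, ht⟩ := h
    have hz : ∀ p q : Fin N, (p : ℕ) < s → (q : ℕ) < t → m p q = 0 := by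
      intro p q hp hq
      by_contra hne
      exact hch p q p0 q0 hne h0 (Fin.lt_def.2 (by omega)) (Fin.lt_def.2 (by omega))
    unfold tailT
    rw [Finset.sum_comm, Finset.sum_comm (f := fun (p q : Fin N) => if s ≤ (p : ℕ) ∧ (q : ℕ) < t then m p q else 0)]
    refine Finset.sum_le_sum fun q _ => ?_
    by_cases hq : (q : ℕ) < t
    · calc _ ≤ ∑ p, m' p q := Finset.sum_le_sum fun p _ => by split_ifs <;> omega
        _ = ∑ p, m p q := hcol q
        _ ≤ _ := Finset.sum_le_sum fun p _ => by
            have := hz p q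
            split_ifs <;> omega
    · simp [hq]
  · push Not at h
    have hz : ∀ p q : Fin N, s ≤ (p : ℕ) → t ≤ (q : ℕ) → m p q = 0 := by
      intro p q hp hq
      by_contra hne
      exact absurd (h p q hne hp) (by omega)
    unfold tailT
    refine Finset.sum_le_sum fun p _ => ?_
    by_cases hp : s ≤ (p : ℕ)
    · calc _ ≤ ∑ q, m' p q := Finset.sum_le_sum fun q _ => by split_ifs <;> omega
        _ = ∑ q, m p q := hrow p
        _ ≤ _ := Finset.sum_le_sum fun q _ => by
            have := hz p q
            split_ifs <;> omega
    · simp [hp]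

lemma tailT_sum {N n : ℕ} (M : Fin N → Fin N → Fin n → ℕ) (s t : ℕ) :
    tailT (fun p q => ∑ k, M p q k) s t = ∑ k, tailT (fun p q => M p q k) s t := by
  unfold tailT
  rw [Finset.sum_comm (s := (Finset.univ : Finset (Fin n)))]
  refine Finset.sum_congr rfl fun p _ => ?_
  rw [Finset.sum_comm (s := (Finset.univ : Finset (Fin n)))]
  refine Finset.sum_congr rfl fun q _ => ?_
  split_ifs <;> simp

lemma indep (n N : ℕ) (hn : 0 < n) (f : MvPolynomial (Fin N × Fin N) ℚ) (hf : ∀ m ∈ f.support, GoodM n N m)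
    (h0 : piHom ℚ n (Fin N) f = 0) : f = 0 := by
  by_contra hne
  obtain ⟨m, hm⟩ := (Finset.exists_minimalFor
    (fun m : (Fin N × Fin N) →₀ ℕ => tailT (fun p q => m (p, q))) f.support
      (support_nonempty.2 hne))
  obtain ⟨c0, hc1, hc2⟩ := coloring n {z | m z ≠ 0} (hf m hm.1)
  let c : Fin N × Fin N → Fin n := fun z => if h : c0 z < n then ⟨c0 z, h⟩ else ⟨0, hn⟩
  have hc : ∀ z z', m z ≠ 0 → m z' ≠ 0 → c z = c z' → ¬ (z.1 < z'.1 ∧ z.2 < z'.2) := by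
    intro z z' hz hz' he
    apply hc2 z hz z' hz'
    simpa [c, hc1 z hz, hc1 z' hz'] using he
  have hcoef : ∀ m' ∈ f.support, m' ≠ m →
      coeff (keyM c m) (piHom ℚ n (Fin N) (monomial m' 1)) = 0 := by
    intro m' hm' hne'
    by_contra hcf
    obtain ⟨M', a, b, d⟩ := pi_support n N m' (keyM c m) (mem_support_iff.2 hcf)
    have hle : tailT (fun p q => m' (p, q)) ≤ tailT (fun p q => m (p, q)) := by
      intro s t
      have e1 : (fun p q => m' (p, q)) = fun p q => ∑ k, M' p q k := by
        funext p q; rw [a]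
      have e2 : (fun p q => m (p, q)) = fun p q => ∑ k, if c (p, q) = k then m (p, q) else 0 := by
        funext p q; simp
      rw [e1, e2, tailT_sum, tailT_sum]
      refine Finset.sum_le_sum fun k _ => tailT_le _ _ ?_ ?_ ?_ s t
      · intro p; rw [b, keyM_inl]
      · intro q; rw [d, keyM_inr]
      · intro p q p' q' h1 h2 hp hq
        have h1' : c (p, q) = k ∧ m (p, q) ≠ 0 := by simpa using h1
        have h2' : c (p', q') = k ∧ m (p', q') ≠ 0 := by simpa using h2
        exact hc _ _ h1'.2 h2'.2 (h1'.1.trans h2'.1.symm) ⟨hp, hq⟩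
    have hge := hm.2 hm' hle
    apply hne'
    ext ⟨p, q⟩
    exact tailT_inj _ _ (fun s t => le_antisymm (hle s t) (hge s t)) p q
  have hmain : coeff (keyM c m) (piHom ℚ n (Fin N) f)
      = coeff m f * coeff (keyM c m) (piHom ℚ n (Fin N) (monomial m 1)) := by
    conv_lhs => rw [f.as_sum]
    rw [map_sum, coeff_sum, Finset.sum_eq_single m]
    · have : (monomial m (coeff m f)) = coeff m f • monomial m (1:ℚ) := by simp [smul_monomial]
      rw [this, map_smul, coeff_smul, smul_eq_mul]
    · intro m' hm' hne'
      have : (monomial m' (coeff m' f)) = coeff m' f • monomial m' (1:ℚ) := by simp [smul_monomial]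
      rw [this, map_smul, coeff_smul, hcoef m' hm' hne', smul_zero]
    · intro h; exact absurd hm.1 h
  rw [h0, coeff_zero] at hmain
  have h1 := (pi_pos c m).2
  have h2 : coeff m f ≠ 0 := mem_support_iff.1 hm.1
  exact (mul_ne_zero h2 h1.ne') hmain.symm

lemma det_rank {R : Type*} [CommRing R] (n : ℕ) (A B : Fin (n+1) → Fin n → R) :
    Matrix.det (Matrix.of fun i j => ∑ k, A i k * B j k) = 0 := by
  have : (Matrix.of fun i j => ∑ k, A i k * B j k : Matrix (Fin (n+1)) (Fin (n+1)) R)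
      = (Matrix.of fun i k => Fin.snoc (α := fun _ => R) (A i) 0 k) *
        (Matrix.of fun k j => Fin.snoc (α := fun _ => R) (B j) 0 k) := by
    ext i j
    simp [Matrix.mul_apply, Fin.sum_univ_castSucc]
  rw [this, Matrix.det_mul, Matrix.det_eq_zero_of_column_eq_zero (Fin.last n), zero_mul]
  intro i; simp

lemma pi_det (K : Type*) [CommRing K] (n : ℕ) (ι : Type*) (m : ℕ) (p q : Fin m → ι) :
    piHom K n ι (Matrix.det (Matrix.of fun i j => X (p i, q j))) =
      Matrix.det (Matrix.of fun i j => ∑ k, X (p i, Sum.inl k) * X (q j, Sum.inr k)) := by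
  rw [AlgHom.map_det]
  congr 1
  ext i j : 2
  simp [piHom]

lemma pi_Iideal (K : Type*) [CommRing K] (n : ℕ) (ι : Type*) :
    ∀ x ∈ Iideal K n ι, piHom K n ι x = 0 := by
  intro x hx
  have : Iideal K n ι ≤ RingHom.ker (piHom K n ι) := by
    refine Ideal.span_le.2 ?_
    rintro _ ⟨p, q, rfl⟩
    rw [SetLike.mem_coe, RingHom.mem_ker, pi_det]
    exact det_rank n _ _
  exact this hx

lemma sft (n N : ℕ) (hn : 0 < n) (f : MvPolynomial (Fin N × Fin N) ℚ)
    (h0 : piHom ℚ n (Fin N) f = 0) : f ∈ Iideal ℚ n (Fin N) := by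
  obtain ⟨g, hg, hfg⟩ := spanning' ℚ n N f
  have hI := pi_Iideal ℚ n (Fin N)
  have : piHom ℚ n (Fin N) g = 0 := by
    have := hI _ hfg
    rwa [map_sub, h0, zero_sub, neg_eq_zero] at this
  rw [indep n N hn g hg this] at hfg
  simpa using hfg

def facM {σ : Type*} (α : σ →₀ ℕ) : ℚ := α.prod fun _ k => (k.factorial : ℚ)

lemma facM_pos {σ : Type*} (α : σ →₀ ℕ) : 0 < facM α := by
  unfold facM
  exact Finset.prod_pos fun i _ => by positivity

lemma facM_succ {σ : Type*} (α : σ →₀ ℕ) (s : σ) :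
    facM (α + Finsupp.single s 1) = (α s + 1) * facM α := by
  unfold facM
  rw [← Finsupp.mul_prod_erase' (α + Finsupp.single s 1) s _ (by simp),
    ← Finsupp.mul_prod_erase' α s _ (by simp), ← mul_assoc]
  congr 1
  · simp [Nat.factorial_succ]
  · congr 1
    ext a
    by_cases h : a = s
    · simp [h]
    · simp [h, Finsupp.single_apply, Ne.symm h]

def fisch (σ : Type*) : MvPolynomial σ ℚ →ₗ[ℚ] MvPolynomial σ ℚ →ₗ[ℚ] ℚ :=
  (basisMonomials σ ℚ).constr ℚ (fun α => facM α • lcoeff ℚ α)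

lemma fisch_mon {σ : Type*} (α : σ →₀ ℕ) (g : MvPolynomial σ ℚ) :
    fisch σ (monomial α 1) g = facM α * coeff α g := by
  have := (basisMonomials σ ℚ).constr_basis ℚ (fun α => facM α • lcoeff ℚ α) α
  rw [coe_basisMonomials] at this
  unfold fisch
  rw [this]
  simp

lemma mon_smul {σ : Type*} {K : Type*} [CommRing K] (α : σ →₀ ℕ) (c : K) :
    (monomial α c) = c • monomial α (1:K) := by simp [smul_monomial]

lemma fisch_eq {σ : Type*} (f g : MvPolynomial σ ℚ) :
    fisch σ f g = ∑ α ∈ f.support, facM α * (coeff α f * coeff α g) := by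
  conv_lhs => rw [f.as_sum]
  rw [map_sum, LinearMap.sum_apply]
  refine Finset.sum_congr rfl fun α _ => ?_
  rw [mon_smul, map_smul, LinearMap.smul_apply, fisch_mon, smul_eq_mul]
  ring

lemma fisch_symm {σ : Type*} (f g : MvPolynomial σ ℚ) : fisch σ f g = fisch σ g f := by
  have h : ∀ f g : MvPolynomial σ ℚ, fisch σ f g =
     ∑ α ∈ f.support ∪ g.support, facM α * (coeff α f * coeff α g) := by
    intro f g
    rw [fisch_eq]
    refine Finset.sum_subset Finset.subset_union_left fun α _ hα => ?_
    rw [notMem_support_iff.1 hα]; ring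
  rw [h, h, Finset.union_comm]
  exact Finset.sum_congr rfl fun α _ => by ring

lemma fisch_def {σ : Type*} (f : MvPolynomial σ ℚ) (h : fisch σ f f = 0) : f = 0 := by
  by_contra hne
  rw [fisch_eq] at h
  have : 0 < ∑ α ∈ f.support, facM α * (coeff α f * coeff α f) :=
    Finset.sum_pos (fun α hα => mul_pos (facM_pos α)
      (mul_self_pos.2 (mem_support_iff.1 hα))) (support_nonempty.2 hne)
  exact this.ne' h

lemma fisch_adj {σ : Type*} (s : σ) (f g : MvPolynomial σ ℚ) :
    fisch σ (X s * f) g = fisch σ f (pderiv s g) := by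
  induction f using MvPolynomial.induction_on' with
  | monomial α c =>
    have : X s * monomial α c = c • monomial (α + Finsupp.single s 1) (1:ℚ) := by
      rw [X, monomial_mul, mon_smul, one_mul, add_comm]
    rw [this, map_smul, mon_smul α c, map_smul, LinearMap.smul_apply, LinearMap.smul_apply,
      fisch_mon, fisch_mon, coeff_pderiv, facM_succ]
    congr 1
    ring
  | add p q hp hq => rw [mul_add, map_add, map_add, LinearMap.add_apply, LinearMap.add_apply, hp, hq]

lemma fisch_proj {σ : Type*} (W : Submodule ℚ (MvPolynomial σ ℚ)) [Module.Finite ℚ W]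
    (g : MvPolynomial σ ℚ) : ∃ h ∈ W, ∀ w ∈ W, fisch σ (g - h) w = 0 := by
  let L : W →ₗ[ℚ] Module.Dual ℚ W := (fisch σ).domRestrict₁₂ W W
  have hinj : Function.Injective L := by
    rw [injective_iff_map_eq_zero]
    intro a ha
    have : L a a = 0 := by rw [ha]; rfl
    exact Subtype.ext (fisch_def a.1 this)
  have hsurj := (LinearMap.injective_iff_surjective_of_finrank_eq_finrank
    (Subspace.dual_finrank_eq (K := ℚ) (V := W)).symm).1 hinj
  obtain ⟨h, hh⟩ := hsurj ((fisch σ g).domRestrict W)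
  refine ⟨h.1, h.2, fun w hw => ?_⟩
  have := LinearMap.congr_fun hh ⟨w, hw⟩
  rw [map_sub, LinearMap.sub_apply, sub_eq_zero]
  exact this.symm

lemma pd_inr (n N : ℕ) (F : MvPolynomial (Fin N × Fin N) ℚ) (j : Fin N) (k : Fin n) :
    pderiv (j, Sum.inr k) (piHom ℚ n (Fin N) F) =
      ∑ p, X (p, Sum.inl k) * piHom ℚ n (Fin N) (pderiv (p, j) F) := by
  induction F using MvPolynomial.induction_on with
  | C a => simp [piHom]
  | add p q hp hq => simp only [map_add, hp, hq, mul_add, Finset.sum_add_distrib]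
  | mul_X f z hf =>
    have hz : pderiv (j, Sum.inr k) (piHom ℚ n (Fin N) (X z)) =
      ∑ p, X (p, Sum.inl k) * piHom ℚ n (Fin N) (pderiv (p, j) (X z)) := by
      obtain ⟨a, b⟩ := z
      simp only [piHom, aeval_X, map_sum, pderiv_mul]
      by_cases h : b = j
      · subst h
        simp [pderiv_X, Pi.single_apply, Prod.ext_iff, apply_ite]
      · simp [pderiv_X, Pi.single_apply, Prod.ext_iff, h]
    rw [map_mul, pderiv_mul, hf, hz, Finset.sum_mul, Finset.mul_sum, ← Finset.sum_add_distrib]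
    refine Finset.sum_congr rfl fun p _ => ?_
    rw [pderiv_mul, map_add, map_mul, map_mul]
    ring

lemma pd_inl (n N : ℕ) (F : MvPolynomial (Fin N × Fin N) ℚ) (i : Fin N) (k : Fin n) :
    pderiv (i, Sum.inl k) (piHom ℚ n (Fin N) F) =
      ∑ q, X (q, Sum.inr k) * piHom ℚ n (Fin N) (pderiv (i, q) F) := by
  induction F using MvPolynomial.induction_on with
  | C a => simp [piHom]
  | add p q hp hq => simp only [map_add, hp, hq, mul_add, Finset.sum_add_distrib]
  | mul_X f z hf =>
    have hz : pderiv (i, Sum.inl k) (piHom ℚ n (Fin N) (X z)) =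
      ∑ q, X (q, Sum.inr k) * piHom ℚ n (Fin N) (pderiv (i, q) (X z)) := by
      obtain ⟨a, b⟩ := z
      simp only [piHom, aeval_X, map_sum, pderiv_mul]
      by_cases h : a = i
      · subst h
        simp [pderiv_X, Pi.single_apply, Prod.ext_iff, apply_ite]
      · simp [pderiv_X, Pi.single_apply, Prod.ext_iff, h]
    rw [map_mul, pderiv_mul, hf, hz, Finset.sum_mul, Finset.mul_sum, ← Finset.sum_add_distrib]
    refine Finset.sum_congr rfl fun p _ => ?_
    rw [pderiv_mul, map_add, map_mul, map_mul]
    ring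

def Aop (N : ℕ) (n : ℕ) (i : Fin N) (F : MvPolynomial (Fin N × Fin N) ℚ) :
    MvPolynomial (Fin N × Fin N) ℚ :=
  ∑ _k : Fin n, pderiv (i, i) F + ∑ p, ∑ q, X (p, q) * pderiv (i, q) (pderiv (p, i) F)

lemma pd_pd (n N : ℕ) (F : MvPolynomial (Fin N × Fin N) ℚ) (i : Fin N) :
    ∑ k, pderiv (i, Sum.inl k) (pderiv (i, Sum.inr k) (piHom ℚ n (Fin N) F)) =
      piHom ℚ n (Fin N) (Aop N n i F) := by
  simp only [pd_inr, map_sum, pderiv_mul, pd_inl, Aop, map_add, map_mul, Finset.sum_add_distrib]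
  congr 1
  · refine Finset.sum_congr rfl fun k _ => ?_
    rw [Finset.sum_eq_single i]
    · simp
    · intro b _ hb
      rw [pderiv_X_of_ne, zero_mul]
      simp [hb]
    · simp
  · rw [Finset.sum_comm]
    refine Finset.sum_congr rfl fun p _ => ?_
    simp only [Finset.mul_sum]
    rw [Finset.sum_comm]
    refine Finset.sum_congr rfl fun q _ => ?_
    simp only [piHom, aeval_X, Finset.sum_mul]
    exact Finset.sum_congr rfl fun p _ => by ring

lemma deg_pd {σ : Type*} (s : σ) (F : MvPolynomial σ ℚ) (E : ℕ) (h : F.totalDegree ≤ E + 1) :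
    (pderiv s F).totalDegree ≤ E := by
  refine Finset.sup_le fun m hm => ?_
  rw [mem_support_iff, coeff_pderiv] at hm
  have h1 : m + Finsupp.single s 1 ∈ F.support := by
    rw [mem_support_iff]
    intro h; apply hm; rw [h, zero_mul]
  have := (le_totalDegree h1).trans h
  rw [Finsupp.sum_add_index' (by simp) (by simp)] at this
  simpa using this

lemma deg_Aop (n N : ℕ) (F : MvPolynomial (Fin N × Fin N) ℚ) (i : Fin N) (E : ℕ)
    (h : F.totalDegree ≤ E + 1) : (Aop N n i F).totalDegree ≤ E := by
  unfold Aop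
  refine (totalDegree_add _ _).trans (max_le ?_ ?_)
  · exact totalDegree_finsetSum_le fun k _ => deg_pd _ _ _ h
  · refine totalDegree_finsetSum_le fun p _ => totalDegree_finsetSum_le fun q _ => ?_
    have h1 := deg_pd (p, i) F E h
    cases E with
    | zero =>
      rw [Nat.le_zero, totalDegree_eq_zero_iff_eq_C] at h1
      rw [h1]; simp
    | succ E =>
      have h2 := deg_pd (i, q) _ E h1
      refine (totalDegree_mul _ _).trans ?_
      rw [totalDegree_X]; omega

def Dg (K : Type*) [CommRing K] (ι : Type*) : Ideal (MvPolynomial (ι × ι) K) :=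
  Ideal.span (Set.range fun i => X (i, i))

lemma purity (n N : ℕ) (hn : 0 < n) (f : MvPolynomial (Fin N × Fin N) ℚ)
    (hf : piHom ℚ n (Fin N) f ∈ Jideal ℚ n (Fin N)) :
    f ∈ Iideal ℚ n (Fin N) ⊔ Dg ℚ (Fin N) := by
  obtain ⟨g, hg⟩ := Ideal.mem_span_range_iff_exists_fun.1 hf
  let W : ℕ → Submodule ℚ (MvPolynomial (Fin N × (Fin n ⊕ Fin n)) ℚ) := fun E =>
    (restrictTotalDegree (Fin N × Fin N) ℚ E).map (piHom ℚ n (Fin N)).toLinearMap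
  have hW : ∀ E G, G.totalDegree ≤ E → piHom ℚ n (Fin N) G ∈ W E := fun E G h =>
    ⟨G, (mem_restrictTotalDegree _ _ _).2 h, rfl⟩
  have hW' : ∀ E w, w ∈ W E → ∃ G, G.totalDegree ≤ E ∧ piHom ℚ n (Fin N) G = w := by
    rintro E w ⟨G, h, rfl⟩
    exact ⟨G, (mem_restrictTotalDegree _ _ _).1 h, rfl⟩
  set E := f.totalDegree
  have : ∀ E, Module.Finite ℚ (W E) := fun E => Module.Finite.map _ _
  choose h hh hk using fun i => fisch_proj (W E) (g i)
  choose H HH hH using fun i => hW' E _ (hh i)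
  have hz : ∀ i, piHom ℚ n (Fin N) (X (i, i)) = qpoly ℚ n i := by
    intro i; simp [piHom, qpoly]
  have hadj : ∀ i (a b : MvPolynomial (Fin N × (Fin n ⊕ Fin n)) ℚ), fisch _ (a * qpoly ℚ n i) b
      = fisch _ a (∑ k, pderiv (i, Sum.inl k) (pderiv (i, Sum.inr k) b)) := by
    intro i a b
    rw [qpoly, Finset.mul_sum, map_sum, map_sum, LinearMap.sum_apply]
    refine Finset.sum_congr rfl fun k _ => ?_
    rw [← fisch_adj, ← fisch_adj]
    congr 2; ring
  have horth : ∀ w ∈ W (E+1), fisch _ (∑ i, (g i - h i) * qpoly ℚ n i) w = 0 := by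
    intro w hw
    obtain ⟨G, hG, rfl⟩ := hW' _ _ hw
    rw [map_sum, LinearMap.sum_apply]
    refine Finset.sum_eq_zero fun i _ => ?_
    rw [hadj, pd_pd]
    exact hk i _ (hW _ _ (deg_Aop n N G i E hG))
  have heq : ∑ i, (g i - h i) * qpoly ℚ n i = piHom ℚ n (Fin N) (f - ∑ i, H i * X (i, i)) := by
    simp only [sub_mul, Finset.sum_sub_distrib, map_sub, map_sum, map_mul, hz, hH]
    rw [hg]
  have h0 : piHom ℚ n (Fin N) (f - ∑ i, H i * X (i, i)) = 0 := by
    rw [← heq]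
    refine fisch_def _ (horth _ ?_)
    rw [heq]
    apply hW
    refine (totalDegree_sub _ _).trans (max_le (Nat.le_succ _) ?_)
    refine totalDegree_finsetSum_le fun i _ => (totalDegree_mul _ _).trans ?_
    rw [totalDegree_X]
    exact Nat.add_le_add_right (HH i) 1
  have h1 := sft n N hn _ h0
  have h2 : ∑ i, H i * X (i, i) ∈ Dg ℚ (Fin N) :=
    Ideal.sum_mem _ fun i _ => Ideal.mul_mem_left _ _ (Ideal.subset_span ⟨i, rfl⟩)
  have := Ideal.add_mem _ ((le_sup_left : _ ≤ Iideal ℚ n (Fin N) ⊔ Dg ℚ (Fin N)) h1) ((le_sup_right : _ ≤ Iideal ℚ n (Fin N) ⊔ Dg ℚ (Fin N)) h2)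
  simpa using this

def lamS {K : Type*} [Field K] [CharZero K] {σ : Type*} (l : K →ₗ[ℚ] ℚ) (f : MvPolynomial σ K) :
    MvPolynomial σ ℚ := ∑ α ∈ f.support, monomial α (l (coeff α f))

section
variable {K : Type*} [Field K] [CharZero K] {σ : Type*} (l : K →ₗ[ℚ] ℚ)

lemma lamS_coeff (f : MvPolynomial σ K) (α : σ →₀ ℕ) : coeff α (lamS l f) = l (coeff α f) := by
  unfold lamS
  rw [coeff_sum]
  simp only [coeff_monomial]
  rw [Finset.sum_ite_eq' f.support α]
  split_ifs with h
  · rfl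
  · rw [notMem_support_iff.1 h, map_zero]

lemma lamS_add (f g : MvPolynomial σ K) : lamS l (f + g) = lamS l f + lamS l g := by
  ext α; simp [lamS_coeff]

lemma lamS_zero : lamS l (0 : MvPolynomial σ K) = 0 := by
  ext α; simp [lamS_coeff]

lemma lamS_sum {ι : Type*} (s : Finset ι) (f : ι → MvPolynomial σ K) :
    lamS l (∑ i ∈ s, f i) = ∑ i ∈ s, lamS l (f i) :=
  map_sum (⟨⟨lamS l, lamS_zero l⟩, lamS_add l⟩ : MvPolynomial σ K →+ MvPolynomial σ ℚ) f s

lemma lamS_mul (g : MvPolynomial σ ℚ) (f : MvPolynomial σ K) :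
    lamS l (f * map (algebraMap ℚ K) g) = lamS l f * g := by
  ext α
  rw [lamS_coeff, coeff_mul, coeff_mul, map_sum]
  refine Finset.sum_congr rfl fun x _ => ?_
  rw [lamS_coeff, coeff_map, mul_comm, ← Algebra.smul_def, map_smul, smul_eq_mul, mul_comm]

lemma lamS_C (c : K) : lamS l (C c : MvPolynomial σ K) = C (l c) := by
  ext α
  rw [lamS_coeff, coeff_C, coeff_C]
  split_ifs <;> simp

lemma piHom_C {R : Type*} [CommRing R] (n : ℕ) (ι : Type*) (a : R) : piHom R n ι (C a) = C a := by
  rw [← algebraMap_eq, AlgHom.commutes, algebraMap_eq]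

lemma piHom_map (n : ℕ) (ι : Type*) (g : MvPolynomial (ι × ι) ℚ) :
    piHom K n ι (map (algebraMap ℚ K) g) = map (algebraMap ℚ K) (piHom ℚ n ι g) := by
  induction g using MvPolynomial.induction_on with
  | C a => 
    rw [map_C, ← algebraMap_eq, ← algebraMap_eq, AlgHom.commutes, AlgHom.commutes,
      algebraMap_eq, algebraMap_eq, map_C]
  | add p q hp hq => simp only [map_add, hp, hq]
  | mul_X f z hf => simp only [map_mul, hf]; simp [piHom]

lemma piHom_lamS (n : ℕ) (ι : Type*) (f : MvPolynomial (ι × ι) K) :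
    piHom ℚ n ι (lamS l f) = lamS l (piHom K n ι f) := by
  induction f using MvPolynomial.induction_on' with
  | monomial α c =>
    have h : monomial α c = C c * map (algebraMap ℚ K) (monomial α (1:ℚ)) := by
      rw [map_monomial, C_mul_monomial, map_one, mul_one]
    rw [h, lamS_mul, lamS_C, map_mul, piHom_C, map_mul, piHom_C, piHom_map, lamS_mul, lamS_C]
  | add p q hp hq => rw [lamS_add, map_add, map_add, hp, hq, lamS_add]

lemma lamS_J (n N : ℕ) (f : MvPolynomial (Fin N × (Fin n ⊕ Fin n)) K) (hf : f ∈ Jideal K n (Fin N)) :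
    lamS l f ∈ Jideal ℚ n (Fin N) := by
  obtain ⟨g, rfl⟩ := Ideal.mem_span_range_iff_exists_fun.1 hf
  rw [lamS_sum]
  refine Ideal.sum_mem _ fun i _ => ?_
  have : qpoly K n i = map (algebraMap ℚ K) (qpoly ℚ n i) := by simp [qpoly]
  rw [this, lamS_mul]
  exact Ideal.mul_mem_left _ _ (Ideal.subset_span ⟨i, rfl⟩)

lemma map_IDg (n : ℕ) (ι : Type*) :
    Iideal ℚ n ι ⊔ Dg ℚ ι ≤ (Iideal K n ι ⊔ Dg K ι).comap (map (algebraMap ℚ K)) := by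
  refine sup_le (Ideal.span_le.2 ?_) (Ideal.span_le.2 ?_)
  · rintro _ ⟨p, q, rfl⟩
    refine (le_sup_left : _ ≤ Iideal K n ι ⊔ Dg K ι) (Ideal.subset_span ⟨p, q, ?_⟩)
    rw [RingHom.map_det]
    congr 1
    ext i j : 2
    simp
  · rintro _ ⟨i, rfl⟩
    refine (le_sup_right : _ ≤ Iideal K n ι ⊔ Dg K ι) (Ideal.subset_span ⟨i, ?_⟩)
    simp

lemma purityK (n N : ℕ) (hn : 0 < n) (f : MvPolynomial (Fin N × Fin N) K)
    (hf : piHom K n (Fin N) f ∈ Jideal K n (Fin N)) :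
    f ∈ Iideal K n (Fin N) ⊔ Dg K (Fin N) := by
  let b := Module.Basis.ofVectorSpace ℚ K
  let S := f.support.biUnion fun α => (b.repr (coeff α f)).support
  have h : f = ∑ i ∈ S, C (b i) * map (algebraMap ℚ K) (lamS (b.coord i) f) := by
    ext α
    rw [coeff_sum]
    simp only [coeff_C_mul, coeff_map, lamS_coeff, Module.Basis.coord_apply]
    conv_lhs => rw [← b.linearCombination_repr (coeff α f)]
    rw [Finsupp.linearCombination_apply]
    rw [Finsupp.sum_of_support_subset (s := S)]
    · refine Finset.sum_congr rfl fun i _ => ?_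
      rw [Algebra.smul_def, mul_comm]
    · by_cases hα : α ∈ f.support
      · exact Finset.subset_biUnion_of_mem (fun α => (b.repr (coeff α f)).support) hα
      · rw [notMem_support_iff.1 hα]; simp
    · simp
  rw [h]
  refine Ideal.sum_mem _ fun i _ => Ideal.mul_mem_left _ _ ?_
  refine map_IDg n (Fin N) (purity n N hn _ ?_)
  rw [piHom_lamS]
  exact lamS_J _ n N _ hf

lemma IDg_le (n : ℕ) (ι : Type*) :
    Iideal K n ι ⊔ Dg K ι ≤ (Jideal K n ι).comap (piHom K n ι) := by
  refine sup_le (fun x hx => ?_) (Ideal.span_le.2 ?_)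
  · rw [Ideal.mem_comap, pi_Iideal K n ι x hx]; exact Ideal.zero_mem _
  · rintro _ ⟨i, rfl⟩
    refine Ideal.subset_span ⟨i, ?_⟩
    simp [piHom, qpoly]

lemma IDg_eq (n N : ℕ) (hn : 0 < n) :
    Iideal K n (Fin N) ⊔ Dg K (Fin N) = (Jideal K n (Fin N)).comap (piHom K n (Fin N)) :=
  le_antisymm (IDg_le n _) fun f hf => purityK n N hn f hf

lemma IDg_prime (n N : ℕ) (hn : 2 ≤ n) :
    (Iideal K n (Fin N) ⊔ Dg K (Fin N)).IsPrime := by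
  rw [IDg_eq n N (by omega)]
  haveI := Jideal_prime K n hn (Fin N)
  exact Ideal.comap_isPrime _ _
end

lemma exists_sigma {ι : Type*} [Finite ι] (n : ℕ) (hn : 2 ≤ n) (xs vs : Fin n → ι) (hx : Function.Injective xs)
    (hv : Function.Injective vs) : ∃ s : Equiv.Perm (Fin n), ∀ i, xs i ≠ vs (s i) := by
  -- partial matching
  let A : Set (Fin n) := {i | ∃ j, xs i = vs j}
  have hA : ∀ i : A, ∃ j, xs i.1 = vs j := fun i => i.2
  choose φ hφ using hA
  have hinj : Function.Injective φ := by
    intro a b hab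
    apply Subtype.ext
    apply hx
    rw [hφ, hφ, hab]
  let e : A ≃ Set.range φ := Equiv.ofInjective φ hinj
  let τ : Equiv.Perm (Fin n) := e.extendSubtype (q := fun x => x ∈ Set.range φ)
  have hτ : ∀ i j, xs i = vs j → τ i = j := by
    intro i j h
    have hi : i ∈ A := ⟨j, h⟩
    have : τ i = e ⟨i, hi⟩ := Equiv.extendSubtype_apply_of_mem (p := fun x => x ∈ A) (q := fun x => x ∈ Set.range φ) e i hi
    rw [this]
    apply hv
    rw [← h]
    exact (hφ ⟨i, hi⟩).symm
  obtain ⟨m, rfl⟩ : ∃ m, n = m + 2 := ⟨n - 2, by omega⟩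
  refine ⟨τ.trans (finRotate _), fun i h => ?_⟩
  have h1 := hτ i _ h
  rw [Equiv.trans_apply, finRotate_succ_apply] at h1
  have h2 : (1 : Fin (m+2)) = 0 := by
    have := h1.symm
    rwa [add_eq_left] at this
  exact absurd h2 (by simp)

lemma det_notMem (K : Type*) [Field K] [CharZero K] (n N : ℕ) (hn : 2 ≤ n) (xs vs : Fin n → Fin N)
    (hx : Function.Injective xs) (hv : Function.Injective vs) :
    Matrix.det (Matrix.of fun i j => X (xs i, vs j)) ∉ Iideal K n (Fin N) ⊔ Dg K (Fin N) := by
  intro hmem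
  obtain ⟨s, hs⟩ := exists_sigma n hn xs vs hx hv
  have h1 : piHom K n (Fin N) _ ∈ Jideal K n (Fin N) := IDg_le n _ hmem
  let ev : MvPolynomial (Fin N × (Fin n ⊕ Fin n)) K →ₐ[K] K :=
    aeval fun z => Sum.elim (fun k => if z.1 = xs k then 1 else 0)
      (fun k => if z.1 = vs (s k) then 1 else 0) z.2
  have hJ : Jideal K n (Fin N) ≤ RingHom.ker ev := by
    refine Ideal.span_le.2 ?_
    rintro _ ⟨i, rfl⟩
    rw [SetLike.mem_coe, RingHom.mem_ker, qpoly, map_sum]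
    refine Finset.sum_eq_zero fun k _ => ?_
    simp only [ev, map_mul, aeval_X, Sum.elim_inl, Sum.elim_inr]
    by_cases h : i = xs k
    · rw [if_neg (c := i = vs (s k)) (by rw [h]; exact hs k), mul_zero]
    · rw [if_neg h, zero_mul]
  have h2 := hJ h1
  rw [RingHom.mem_ker, pi_det, AlgHom.map_det] at h2
  have h3 : ev.mapMatrix (Matrix.of fun i j => ∑ k, X (xs i, Sum.inl k) * X (vs j, Sum.inr k))
      = (s.permMatrix K) := by
    ext i j
    simp only [AlgHom.mapMatrix_apply, Matrix.map_apply, Matrix.of_apply, map_sum, map_mul, ev,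
      aeval_X, Sum.elim_inl, Sum.elim_inr, hx.eq_iff, hv.eq_iff]
    rw [Finset.sum_eq_single i (fun b _ hb => by simp [Ne.symm hb]) (by simp)]
    simp [Equiv.Perm.permMatrix, PEquiv.toMatrix_apply, eq_comm]
  rw [h3, Matrix.det_permutation] at h2
  rcases Int.units_eq_one_or (Equiv.Perm.sign s) with h | h <;> rw [h] at h2 <;> simp at h2

def jHom (K : Type) [Field K] (P : Set Circle1) {N : ℕ} (e : Fin N → ↥P) :
    MvPolynomial (Fin N × Fin N) K →ₐ[K] SwapRing K P :=
  aeval fun z => gen K P (e z.1) (e z.2)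

def rr (K : Type) [Field K] (P : Set Circle1) {N : ℕ} [Nonempty (Fin N)] (e : Fin N → ↥P)
    (x y : ↥P) : MvPolynomial (Fin N × Fin N) K :=
  if x ∈ Set.range e ∧ y ∈ Set.range e then X (Function.invFun e x, Function.invFun e y) else 0

def rHom (K : Type) [Field K] (P : Set Circle1) {N : ℕ} [Nonempty (Fin N)] (e : Fin N → ↥P) :
    SwapRing K P →ₐ[K] MvPolynomial (Fin N × Fin N) K :=
  aeval fun q => rr K P e q.1.1 q.1.2

section
variable (K : Type) [Field K] (P : Set Circle1) {N : ℕ} (e : Fin N → ↥P)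

lemma jHom_det (m : ℕ) (p q : Fin m → Fin N) :
    jHom K P e (Matrix.det (Matrix.of fun i j => X (p i, q j))) =
      Dmat K P m (fun i => e (p i)) (fun i => e (q i)) := by
  rw [AlgHom.map_det, Dmat]
  congr 1
  ext i j : 2
  simp [jHom]

lemma jHom_IDg (n : ℕ) :
    Iideal K n (Fin N) ⊔ Dg K (Fin N) ≤ (Rideal K P n).comap (jHom K P e) := by
  refine sup_le (Ideal.span_le.2 ?_) (Ideal.span_le.2 ?_)
  · rintro _ ⟨p, q, rfl⟩
    refine Ideal.subset_span ⟨fun i => e (p i), fun i => e (q i), ?_⟩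
    exact jHom_det K P e (n+1) p q
  · rintro _ ⟨i, rfl⟩
    rw [SetLike.mem_coe, Ideal.mem_comap]
    have : jHom K P e (X (i, i)) = 0 := by simp [jHom, gen]
    rw [this]
    exact Ideal.zero_mem _

lemma rr_inj [Nonempty (Fin N)] (he : Function.Injective e) (p q : Fin N) :
    rr K P e (e p) (e q) = X (p, q) := by
  rw [rr, if_pos ⟨⟨p, rfl⟩, ⟨q, rfl⟩⟩, Function.leftInverse_invFun he, Function.leftInverse_invFun he]

lemma rHom_gen [Nonempty (Fin N)] (x y : ↥P) :
    rHom K P e (gen K P x y) - rr K P e x y ∈ Dg K (Fin N) := by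
  by_cases h : x = y
  · subst h
    have : gen K P x x = 0 := by simp [gen]
    rw [this, map_zero, zero_sub, neg_mem_iff, rr]
    split_ifs
    · exact Ideal.subset_span ⟨_, rfl⟩
    · exact Ideal.zero_mem _
  · have : gen K P x y = X ⟨(x, y), h⟩ := by simp [gen, h]
    rw [this, rHom, aeval_X, sub_self]
    exact Ideal.zero_mem _

lemma rHom_det [Nonempty (Fin N)] (m : ℕ) (xs ys : Fin m → ↥P) :
    rHom K P e (Dmat K P m xs ys) - Matrix.det (Matrix.of fun i j => rr K P e (xs i) (ys j))
      ∈ Dg K (Fin N) := by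
  rw [← Ideal.Quotient.eq, Dmat, AlgHom.map_det, RingHom.map_det, RingHom.map_det]
  congr 1
  ext i j : 2
  exact Ideal.Quotient.eq.2 (rHom_gen K P e _ _)

lemma rHom_R [Nonempty (Fin N)] (n : ℕ) :
    Rideal K P n ≤ (Iideal K n (Fin N) ⊔ Dg K (Fin N)).comap (rHom K P e) := by
  refine Ideal.span_le.2 ?_
  rintro _ ⟨xs, ys, rfl⟩
  rw [SetLike.mem_coe, Ideal.mem_comap]
  have h1 := (le_sup_right : _ ≤ Iideal K n (Fin N) ⊔ Dg K (Fin N)) (rHom_det K P e (n+1) xs ys)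
  have h2 : Matrix.det (Matrix.of fun i j => rr K P e (xs i) (ys j)) ∈ Iideal K n (Fin N) := by
    by_cases hx : ∀ i, xs i ∈ Set.range e
    · by_cases hy : ∀ i, ys i ∈ Set.range e
      · refine Ideal.subset_span ⟨fun i => Function.invFun e (xs i),
          fun i => Function.invFun e (ys i), ?_⟩
        congr 1
        ext i j : 2
        simp only [Matrix.of_apply]
        rw [rr, if_pos ⟨hx i, hy j⟩]
      · push Not at hy
        obtain ⟨j, hj⟩ := hy
        rw [Matrix.det_eq_zero_of_column_eq_zero j]
        · exact Ideal.zero_mem _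
        · intro i
          rw [Matrix.of_apply, rr, if_neg (fun h => hj h.2)]
    · push Not at hx
      obtain ⟨i, hi⟩ := hx
      rw [Matrix.det_eq_zero_of_row_eq_zero i]
      · exact Ideal.zero_mem _
      · intro j
        rw [Matrix.of_apply, rr, if_neg (fun h => hi h.1)]
  have := Ideal.add_mem _ h1 ((le_sup_left : _ ≤ Iideal K n (Fin N) ⊔ Dg K (Fin N)) h2)
  rwa [sub_add_cancel] at this

lemma j_r [Nonempty (Fin N)] (f : SwapRing K P)
    (hf : ∀ q ∈ f.vars, q.1.1 ∈ Set.range e ∧ q.1.2 ∈ Set.range e) :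
    jHom K P e (rHom K P e f) = f := by
  have := hom_congr_vars (f₁ := ((jHom K P e).comp (rHom K P e) : SwapRing K P →+* SwapRing K P))
    (f₂ := RingHom.id _) (p₁ := f) (p₂ := f) ?_ ?_ rfl
  · exact this
  · ext a
    simp [rHom, jHom]
  · intro q hq _
    obtain ⟨h1, h2⟩ := hf q hq
    have : rHom K P e (X q) = X (Function.invFun e q.1.1, Function.invFun e q.1.2) := by
      rw [rHom, aeval_X, rr, if_pos ⟨h1, h2⟩]
    change jHom K P e (rHom K P e (X q)) = X q
    rw [this, jHom, aeval_X]
    simp only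
    rw [Function.invFun_eq h1, Function.invFun_eq h2, gen, dif_pos q.2]
end

lemma exists_e (P : Set Circle1) (F : Finset ↥P) :
    ∃ (N : ℕ) (e : Fin N → ↥P), Function.Injective e ∧ ∀ x ∈ F, x ∈ Set.range e :=
  ⟨F.card, fun i => (F.equivFin.symm i).1,
    fun a b h => F.equivFin.symm.injective (Subtype.ext h),
    fun x hx => ⟨F.equivFin ⟨x, hx⟩, by simp⟩⟩

lemma Dmat_nzd (K : Type) [Field K] [CharZero K] (P : Set Circle1) (n : ℕ) (hn : 2 ≤ n)
    (xs vs : Fin n → ↥P) (hx : Function.Injective xs) (hv : Function.Injective vs) :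
    toZn K P n (Dmat K P n xs vs) ∈ nonZeroDivisors (ZnRing K P n) := by
  rw [mem_nonZeroDivisors_iff_right]
  intro z hz
  obtain ⟨f, rfl⟩ := Ideal.Quotient.mk_surjective z
  have hz' : f * Dmat K P n xs vs ∈ Rideal K P n := by
    rw [← Ideal.Quotient.eq_zero_iff_mem, map_mul]
    exact hz
  obtain ⟨N, e, he, hF⟩ := exists_e P (Finset.univ.image xs ∪ Finset.univ.image vs ∪
    f.vars.image (fun q => q.1.1) ∪ f.vars.image (fun q => q.1.2))
  have hxs : ∀ i, ∃ p, e p = xs i := fun i => hF _ (by simp)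
  have hvs : ∀ i, ∃ p, e p = vs i := fun i => hF _ (by simp)
  have hf : ∀ q ∈ f.vars, q.1.1 ∈ Set.range e ∧ q.1.2 ∈ Set.range e := by
    intro q hq
    refine ⟨hF _ (Finset.mem_union_left _ (Finset.mem_union_right _
      (Finset.mem_image_of_mem (fun q : SwapIdx P => q.1.1) hq))),
      hF _ (Finset.mem_union_right _ (Finset.mem_image_of_mem (fun q : SwapIdx P => q.1.2) hq))⟩
  choose p hp using hxs
  choose q hq using hvs
  haveI : Nonempty (Fin N) := ⟨p ⟨0, by omega⟩⟩
  have h1 : rHom K P e _ ∈ Iideal K n (Fin N) ⊔ Dg K (Fin N) := rHom_R K P e n hz'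
  rw [map_mul] at h1
  rcases (IDg_prime (K := K) n N hn).mem_or_mem h1 with h | h
  · have h2 : jHom K P e _ ∈ Rideal K P n := jHom_IDg K P e n h
    rw [j_r K P e f hf] at h2
    exact Ideal.Quotient.eq_zero_iff_mem.2 h2
  · exfalso
    have h2 := (le_sup_right : _ ≤ Iideal K n (Fin N) ⊔ Dg K (Fin N)) (rHom_det K P e n xs vs)
    have h3 := Ideal.sub_mem _ h h2
    rw [sub_sub_cancel] at h3
    have h4 : (Matrix.of fun i j => rr K P e (xs i) (vs j)) = Matrix.of fun i j => X (p i, q j) := by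
      ext i j : 2
      simp only [Matrix.of_apply]
      rw [← hp, ← hq, rr_inj K P e he]
    rw [h4] at h3
    refine det_notMem K n N hn p q ?_ ?_ h3
    · intro a b hab
      apply hx
      rw [← hp, ← hp, hab]
    · intro a b hab
      apply hv
      rw [← hq, ← hq, hab]

lemma Dmat_rel (K : Type) [Field K] [CharZero K] (P : Set Circle1) (n : ℕ) (hn : 2 ≤ n)
    (a b u v : Fin n → ↥P) :
    Dmat K P n a v * Dmat K P n b u - Dmat K P n a u * Dmat K P n b v ∈ Rideal K P n := by
  obtain ⟨N, e, he, hF⟩ := exists_e P (Finset.univ.image a ∪ Finset.univ.image b ∪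
    Finset.univ.image u ∪ Finset.univ.image v)
  have ha : ∀ i, ∃ p, e p = a i := fun i => hF _ (by simp)
  have hb : ∀ i, ∃ p, e p = b i := fun i => hF _ (by simp)
  have hu : ∀ i, ∃ p, e p = u i := fun i => hF _ (by simp)
  have hv : ∀ i, ∃ p, e p = v i := fun i => hF _ (by simp)
  choose a' ha using ha
  choose b' hb using hb
  choose u' hu using hu
  choose v' hv using hv
  obtain rfl : (fun i => e (a' i)) = a := funext ha
  obtain rfl : (fun i => e (b' i)) = b := funext hb
  obtain rfl : (fun i => e (u' i)) = u := funext hu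
  obtain rfl : (fun i => e (v' i)) = v := funext hv
  rw [← jHom_det, ← jHom_det, ← jHom_det, ← jHom_det, ← map_mul, ← map_mul, ← map_sub]
  refine jHom_IDg K P e n (purityK n N (by omega) _ ?_)
  have hd : ∀ p q : Fin n → Fin N, piHom K n (Fin N) (Matrix.det (Matrix.of fun i j => X (p i, q j)))
      = Matrix.det (Matrix.of fun i k => X (p i, Sum.inl k)) *
        Matrix.det (Matrix.of fun k j => X (q j, Sum.inr k)) := by
    intro p q
    rw [pi_det, ← Matrix.det_mul]
    congr 1
  rw [map_sub, map_mul, map_mul, hd, hd, hd, hd]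
  convert Ideal.zero_mem _ using 1
  ring

/-- Let `x_1, …, x_{n-1}, t, y, v_1, …, v_n, u_1, …, u_n ∈ P` with
`x_1, …, x_{n-1}, y` pairwise distinct, `v_1, …, v_n` pairwise distinct and `u_1, …, u_n`
pairwise distinct.  Then in `Q_n(P)`,
`Δ((x,t),(v_1,…,v_n)) / Δ((x,y),(v_1,…,v_n)) = Δ((x,t),(u_1,…,u_n)) / Δ((x,y),(u_1,…,u_n))`:
the quotient of two `(n×n)`-determinants with the same right-side `n`-tuple does not depend
on that right-side `n`-tuple.  (Families are indexed from `0`.) -/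
theorem determinant_quotient_independent (K : Type) [Field K] [CharZero K]
    (P : Set Circle1) (n : ℕ) (hn : 2 ≤ n)
    (x : ℕ → ↥P) (t y : ↥P) (v u : ℕ → ↥P)
    (hxy : Function.Injective (snocTup (n := n) x y))
    (hv : Function.Injective (fun i : Fin n => v (i : ℕ)))
    (hu : Function.Injective (fun i : Fin n => u (i : ℕ))) :
    toZn K P n (Dmat K P n (snocTup x y) (fun i : Fin n => v (i : ℕ)))
        ∈ nonZeroDivisors (ZnRing K P n) ∧
    toZn K P n (Dmat K P n (snocTup x y) (fun i : Fin n => u (i : ℕ)))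
        ∈ nonZeroDivisors (ZnRing K P n) ∧
    ∀ (h1 : toZn K P n (Dmat K P n (snocTup x y) (fun i : Fin n => v (i : ℕ)))
            ∈ nonZeroDivisors (ZnRing K P n))
      (h2 : toZn K P n (Dmat K P n (snocTup x y) (fun i : Fin n => u (i : ℕ)))
            ∈ nonZeroDivisors (ZnRing K P n)),
      EQuot K P n (snocTup x t) (snocTup x y) (fun i : Fin n => v (i : ℕ)) h1
        = EQuot K P n (snocTup x t) (snocTup x y) (fun i : Fin n => u (i : ℕ)) h2 := by
  have h1 := Dmat_nzd K P n hn (snocTup x y) (fun i : Fin n => v (i : ℕ)) hxy hv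
  have h2 := Dmat_nzd K P n hn (snocTup x y) (fun i : Fin n => u (i : ℕ)) hxy hu
  refine ⟨h1, h2, fun h1 h2 => ?_⟩
  have h := Ideal.Quotient.eq.2 (Dmat_rel K P n hn (snocTup x t) (snocTup x y)
    (fun i : Fin n => u (i : ℕ)) (fun i : Fin n => v (i : ℕ)))
  rw [map_mul, map_mul] at h
  unfold EQuot
  rw [Localization.mk_eq_mk_iff]
  refine Localization.r_of_eq ?_
  change toZn K P n _ * toZn K P n _ = toZn K P n _ * toZn K P n _
  rw [mul_comm, mul_comm (toZn K P n _) (toZn K P n (Dmat K P n (snocTup x t) _))]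
  exact h

end
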